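/- Let n ≥ 1 and k ∈ {1, …, n}. Consider the tuple of lattice polyhedra in ℝ^n consisting of k copies of C_{1,…,1,2,…,2} (with k−1 entries equal to 1 followed by n−k+1 entries equal to 2) and n−k copies of C_{1,…,1}. Then the relative mixed volume of this tuple equals 2. -/

import Mathlib

/-!
Put `m = k - 1` and let `s`, `t` be the sums of the first `m` and of the remaining coordinates. If
`I` contains `p` indices from the first block and `q` from the second, then `∑ i ∈ I, B i` is cut out
of the orthant by `p + q ≤ s + t` and `2 p + q ≤ 2 s + t` (`sum_eq_gPoly`); the nontrivial inclusion
only concerns `(s, t)`, i.e. polygons in the plane.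

Its complement in the orthant has volume `∑ j, 2 ^ max (j - m) 0 * p ^ j / j! * q ^ (n - j) / (n - j)!`
(`volume_diff_gPoly`). This follows by induction on the dimension by slicing along the last
coordinate `v`: the slices are complements of the same kind, with parameters `(p, q - v)` for `v < q`
and `(p - (v - q) / 2, 0)` for `q ≤ v < 2 p + q`.

The alternating sum over `I` factors over the two blocks, and each factor is an iterated forward
difference of a power, so it annihilates every monomial except `p ^ k * q ^ (n - k)`, on which it is
`k! (n - k)!` (`alt_sum_split`). What remains is `2 ^ (k - m) = 2`.
-/

open Pointwise MeasureTheory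

noncomputable section

/-- The positive (closed) orthant in `ℝ^n`. -/
def orthant (n : ℕ) : Set (Fin n → ℝ) := {x | ∀ i, 0 ≤ x i}

/-- The standard basis vector `e m`. -/
def stdVec {n : ℕ} (m : Fin n) : Fin n → ℝ := Pi.single m 1

/-- A lattice polyhedron: the Minkowski sum of the convex hull of a finite nonempty set of
points with nonnegative integer coordinates and the positive orthant. -/
def IsLatticePolyhedron {n : ℕ} (B : Set (Fin n → ℝ)) : Prop :=
  ∃ F : Finset (Fin n → ℝ), F.Nonempty ∧
    (∀ p ∈ F, ∀ i, ∃ m : ℕ, p i = (m : ℝ)) ∧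
    B = convexHull ℝ (↑F) + orthant n

/-- The relative mixed volume of the pairs `(C, B 1), …, (C, B n)`. -/
def MV {n : ℕ} (B : Fin n → Set (Fin n → ℝ)) : ℝ :=
  ∑ I ∈ Finset.univ.powerset.filter (fun I : Finset (Fin n) => I.Nonempty),
    (-1 : ℝ) ^ (n - I.card) * (volume (orthant n \ ∑ i ∈ I, B i)).toReal

/-- The polyhedron `C_{a_1,…,a_n} = conv({a_1 e_1, …, a_n e_n}) + C`. -/
def Caf {n : ℕ} (a : Fin n → ℝ) : Set (Fin n → ℝ) :=
  convexHull ℝ (Set.range fun i : Fin n => Pi.single i (a i)) + orthant n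

/-- A tuple of polyhedra is minimal with mixed volume `V`. -/
def IsMinimalTuple {n : ℕ} (B : Fin n → Set (Fin n → ℝ)) (V : ℝ) : Prop :=
  MV B = V ∧ ∀ i : Fin n, ∀ δ : Fin n → ℝ,
    (∀ j, ∃ m : ℤ, δ j = (m : ℝ)) → δ ∈ orthant n → δ ∉ B i →
    MV (Function.update B i (convexHull ℝ (B i ∪ {δ}))) < V

/-! ### Facet inequalities of the polyhedra -/

theorem mem_orthant {n : ℕ} {x : Fin n → ℝ} : x ∈ orthant n ↔ ∀ i, 0 ≤ x i := Iff.rfl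

/-- The polyhedron spanned by the points `a i • e i` is cut out of the orthant by one linear
inequality. -/
theorem mem_Caf {n : ℕ} (a : Fin n → ℝ) (ha : ∀ i, 0 < a i) (x : Fin n → ℝ) :
    x ∈ Caf a ↔ x ∈ orthant n ∧ 1 ≤ ∑ i, x i / a i := by
  constructor
  · rintro ⟨y, hy, z, hz, rfl⟩
    have key : convexHull ℝ (Set.range fun i : Fin n => Pi.single i (a i)) ⊆
        {x | x ∈ orthant n ∧ 1 ≤ ∑ i, x i / a i} := by
      apply convexHull_min
      · rintro _ ⟨i, rfl⟩
        refine ⟨fun j => ?_, ?_⟩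
        · by_cases h : j = i
          · subst h; simpa using (ha j).le
          · simp [h]
        · rw [Finset.sum_eq_single i]
          · simp [(ha i).ne']
          · intro b _ hb; simp [hb]
          · simp
      · intro x hx y hy s t hs ht hst
        refine ⟨fun i => ?_, ?_⟩
        · have := hx.1 i
          have := hy.1 i
          simp only [Pi.add_apply, Pi.smul_apply, smul_eq_mul]
          positivity
        · have e : ∑ i, (s • x + t • y) i / a i = s * ∑ i, x i / a i + t * ∑ i, y i / a i := by
            simp only [Finset.mul_sum, ← Finset.sum_add_distrib, Pi.add_apply, Pi.smul_apply,
              smul_eq_mul]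
            exact Finset.sum_congr rfl fun i _ => by ring
          rw [e]
          nlinarith [mul_le_mul_of_nonneg_left hx.2 hs, mul_le_mul_of_nonneg_left hy.2 ht]
    obtain ⟨h1, h2⟩ := key hy
    refine ⟨fun i => add_nonneg (h1 i) (hz i), h2.trans ?_⟩
    apply Finset.sum_le_sum
    intro i _
    have := ha i
    have := hz i
    simp only [Pi.add_apply]
    gcongr
    linarith
  -- Scaling `x` down onto the simplex `∑ i, x i / a i = 1` gives the convex combination.
  · rintro ⟨h0, h1⟩
    set σ := ∑ i, x i / a i with hσ
    have hσ0 : 0 < σ := by linarith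
    refine ⟨σ⁻¹ • x, ?_, x - σ⁻¹ • x, ?_, by simp⟩
    · have e : σ⁻¹ • x = ∑ i, (σ⁻¹ * (x i / a i)) • (Pi.single i (a i) : Fin n → ℝ) := by
        ext j
        simp only [Finset.sum_apply, Pi.smul_apply, smul_eq_mul]
        rw [Finset.sum_eq_single j]
        · simp; field_simp [(ha j).ne']
        · intro b _ hb; simp [Ne.symm hb]
        · simp
      rw [e]
      apply (convex_convexHull ℝ _).sum_mem
      · intro i _
        have := ha i
        have := h0 i
        positivity
      · rw [← Finset.mul_sum, ← hσ]; exact inv_mul_cancel₀ hσ0.ne'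
      · intro i _
        exact subset_convexHull _ _ ⟨i, rfl⟩
    · intro i
      have : σ⁻¹ ≤ 1 := inv_le_one_of_one_le₀ h1
      simp only [Pi.sub_apply, Pi.smul_apply, smul_eq_mul]
      nlinarith [h0 i]

/-- The sum of the coordinates of `x` with index `< m`. -/
def headSum (m : ℕ) {n : ℕ} (x : Fin n → ℝ) : ℝ := ∑ i : Fin n, if (i : ℕ) < m then x i else 0
/-- The sum of the coordinates of `x` with index `≥ m`. -/
def tailSum (m : ℕ) {n : ℕ} (x : Fin n → ℝ) : ℝ := ∑ i : Fin n, if (i : ℕ) < m then 0 else x i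

/-- The polyhedron `p • C_{1,…,1,2,…,2} + q • C_{1,…,1}` (with `m` entries equal to `1` in the first
factor), for `p, q ≥ 0` not both zero, described by its facet inequalities. -/
def gPoly (m n : ℕ) (p q : ℝ) : Set (Fin n → ℝ) :=
  {x | x ∈ orthant n ∧ p + q ≤ headSum m x + tailSum m x ∧
    2 * p + q ≤ 2 * headSum m x + tailSum m x}

theorem headSum_add (m : ℕ) {n : ℕ} (x y : Fin n → ℝ) :
    headSum m (x + y) = headSum m x + headSum m y := by
  simp only [headSum, ← Finset.sum_add_distrib]
  exact Finset.sum_congr rfl fun i _ => by split_ifs <;> simp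

theorem tailSum_add (m : ℕ) {n : ℕ} (x y : Fin n → ℝ) :
    tailSum m (x + y) = tailSum m x + tailSum m y := by
  simp only [tailSum, ← Finset.sum_add_distrib]
  exact Finset.sum_congr rfl fun i _ => by split_ifs <;> simp

theorem headSum_nonneg (m : ℕ) {n : ℕ} {x : Fin n → ℝ} (hx : x ∈ orthant n) :
    0 ≤ headSum m x :=
  Finset.sum_nonneg fun i _ => by split_ifs; exacts [hx i, le_rfl]

theorem tailSum_nonneg (m : ℕ) {n : ℕ} {x : Fin n → ℝ} (hx : x ∈ orthant n) :
    0 ≤ tailSum m x :=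
  Finset.sum_nonneg fun i _ => by split_ifs; exacts [le_rfl, hx i]

/-- Any `0 ≤ a ≤ headSum m x` and `0 ≤ b ≤ tailSum m x` are the block sums of some `y` with
`0 ≤ y ≤ x`: scale each block of `x`. This reduces Minkowski decompositions to the plane. -/
theorem exists_split (m : ℕ) {n : ℕ} {x : Fin n → ℝ} (hx : x ∈ orthant n) {a b : ℝ}
    (ha : 0 ≤ a) (has : a ≤ headSum m x) (hb : 0 ≤ b) (hbt : b ≤ tailSum m x) :
    ∃ y ∈ orthant n, ∃ z ∈ orthant n, z + y = x ∧ headSum m y = a ∧ tailSum m y = b := by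
  have aux : ∀ c d : ℝ, 0 ≤ c → c ≤ d → ∃ θ : ℝ, 0 ≤ θ ∧ θ ≤ 1 ∧ θ * d = c := by
    intro c d hc hcd
    rcases hc.eq_or_lt with h | h
    · exact ⟨0, le_rfl, zero_le_one, by simp [← h]⟩
    · have hd : 0 < d := by linarith
      exact ⟨c / d, by positivity, (div_le_one hd).2 hcd, by field_simp⟩
  obtain ⟨θ, hθ0, hθ1, hθ⟩ := aux _ _ ha has
  obtain ⟨φ, hφ0, hφ1, hφ⟩ := aux _ _ hb hbt
  refine ⟨fun i => if (i : ℕ) < m then θ * x i else φ * x i, fun i => ?_,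
    fun i => if (i : ℕ) < m then (1 - θ) * x i else (1 - φ) * x i, fun i => ?_, ?_, ?_, ?_⟩
  · have := hx i
    dsimp only
    split_ifs <;> positivity
  · dsimp only
    split_ifs
    · exact mul_nonneg (by linarith) (hx i)
    · exact mul_nonneg (by linarith) (hx i)
  · ext i
    simp only [Pi.add_apply]
    split_ifs <;> ring
  · rw [← hθ, headSum, headSum, Finset.mul_sum]
    exact Finset.sum_congr rfl fun i _ => by split_ifs <;> simp
  · rw [← hφ, tailSum, tailSum, Finset.mul_sum]
    exact Finset.sum_congr rfl fun i _ => by split_ifs <;> simp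

theorem add_mem_orthant {n : ℕ} {x y : Fin n → ℝ} (hx : x ∈ orthant n) (hy : y ∈ orthant n) :
    x + y ∈ orthant n := fun i => add_nonneg (hx i) (hy i)

theorem gPoly_add_subset (m n : ℕ) (p q p' q' : ℝ) :
    gPoly m n p q + gPoly m n p' q' ⊆ gPoly m n (p + p') (q + q') := by
  rintro _ ⟨x, ⟨hx, h1, h2⟩, y, ⟨hy, h3, h4⟩, rfl⟩
  refine ⟨add_mem_orthant hx hy, ?_, ?_⟩ <;> dsimp only <;> rw [headSum_add, tailSum_add] <;> linarith

theorem gPoly_add_left (m n : ℕ) (p q : ℝ) (hp : 0 ≤ p) (hq : 0 ≤ q) :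
    gPoly m n p q + gPoly m n 1 0 = gPoly m n (p + 1) q := by
  apply Set.Subset.antisymm
  · simpa using gPoly_add_subset m n p q 1 0
  rintro x ⟨hx, h1, h2⟩
  have hs := headSum_nonneg m hx
  have ht := tailSum_nonneg m hx
  have : ∃ a b : ℝ, 0 ≤ a ∧ a ≤ headSum m x ∧ 0 ≤ b ∧ b ≤ tailSum m x ∧ 2 * a + b = 2 ∧
      a + b ≤ headSum m x + tailSum m x - p - q := by
    -- On the line `2a + b = 2` the sum `a + b` is least when `a` is as large as possible.
    rcases le_total 1 (headSum m x) with h | h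
    · exact ⟨1, 0, by norm_num, h, le_rfl, ht, by norm_num, by linarith⟩
    · exact ⟨headSum m x, 2 - 2 * headSum m x, hs, le_rfl, by linarith, by linarith, by ring,
        by linarith⟩
  obtain ⟨a, b, ha, has, hb, hbt, hab, hab'⟩ := this
  obtain ⟨y, hy, z, hz, rfl, rfl, rfl⟩ := exists_split m hx ha has hb hbt
  rw [headSum_add, tailSum_add] at *
  exact Set.add_mem_add ⟨hz, by linarith, by linarith⟩ ⟨hy, by linarith, by linarith⟩

theorem gPoly_add_right (m n : ℕ) (p q : ℝ) (hp : 0 ≤ p) (hq : 0 ≤ q) :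
    gPoly m n p q + gPoly m n 0 1 = gPoly m n p (q + 1) := by
  apply Set.Subset.antisymm
  · simpa using gPoly_add_subset m n p q 0 1
  rintro x ⟨hx, h1, h2⟩
  have hs := headSum_nonneg m hx
  have ht := tailSum_nonneg m hx
  have : ∃ a b : ℝ, 0 ≤ a ∧ a ≤ headSum m x ∧ 0 ≤ b ∧ b ≤ tailSum m x ∧ a + b = 1 ∧
      2 * a + b ≤ 2 * headSum m x + tailSum m x - 2 * p - q := by
    -- On the line `a + b = 1` the value `2a + b` is least when `b` is as large as possible.
    rcases le_total 1 (tailSum m x) with h | h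
    · exact ⟨0, 1, le_rfl, hs, by norm_num, h, by norm_num, by linarith⟩
    · exact ⟨1 - tailSum m x, tailSum m x, by linarith, by linarith, ht, le_rfl, by ring,
        by linarith⟩
  obtain ⟨a, b, ha, has, hb, hbt, hab, hab'⟩ := this
  obtain ⟨y, hy, z, hz, rfl, rfl, rfl⟩ := exists_split m hx ha has hb hbt
  rw [headSum_add, tailSum_add] at *
  exact Set.add_mem_add ⟨hz, by linarith, by linarith⟩ ⟨hy, by linarith, by linarith⟩

theorem Caf_one_two (m n : ℕ) :
    Caf (fun j : Fin n => if (j : ℕ) < m then (1 : ℝ) else 2) = gPoly m n 1 0 := by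
  ext x
  rw [mem_Caf _ (fun i => by split_ifs <;> norm_num)]
  have e : ∑ i : Fin n, x i / (if (i : ℕ) < m then (1 : ℝ) else 2)
      = headSum m x + tailSum m x / 2 := by
    rw [headSum, tailSum, Finset.sum_div, ← Finset.sum_add_distrib]
    exact Finset.sum_congr rfl fun i _ => by split_ifs <;> simp
  rw [e]
  refine and_congr_right fun hx => ?_
  have ht := tailSum_nonneg m hx
  constructor
  · intro h; constructor <;> linarith
  · rintro ⟨_, h⟩; linarith

/-- The cut-off index `m` is arbitrary: it only selects how the coordinates are split. -/
theorem Caf_one (m n : ℕ) : Caf (fun _ : Fin n => (1 : ℝ)) = gPoly m n 0 1 := by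
  ext x
  rw [mem_Caf _ (fun i => by norm_num)]
  have e : ∑ i : Fin n, x i / (1 : ℝ) = headSum m x + tailSum m x := by
    rw [headSum, tailSum, ← Finset.sum_add_distrib]
    exact Finset.sum_congr rfl fun i _ => by split_ifs <;> simp
  rw [e]
  refine and_congr_right fun hx => ?_
  have hs := headSum_nonneg m hx
  constructor
  · intro h; constructor <;> linarith
  · rintro ⟨h, _⟩; linarith

theorem sum_eq_gPoly {m n k : ℕ} (B : Fin n → Set (Fin n → ℝ))
    (hB : ∀ i : Fin n, B i = if (i : ℕ) < k then gPoly m n 1 0 else gPoly m n 0 1)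
    (I : Finset (Fin n)) (hI : I.Nonempty) :
    ∑ i ∈ I, B i = gPoly m n ((I.filter fun i : Fin n => (i : ℕ) < k).card : ℝ)
      ((I.filter fun i : Fin n => ¬ (i : ℕ) < k).card : ℝ) := by
  induction hI using Finset.Nonempty.cons_induction with
  | singleton i =>
    rw [Finset.sum_singleton, hB, Finset.filter_singleton, Finset.filter_singleton]
    split_ifs <;> simp
  | cons i I hi hI ih =>
    rw [Finset.sum_cons, ih, hB, add_comm]
    by_cases h : (i : ℕ) < k
    · rw [if_pos h, gPoly_add_left _ _ _ _ (Nat.cast_nonneg _) (Nat.cast_nonneg _),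
        Finset.filter_cons_of_pos _ _ _ hi h, Finset.filter_cons_of_neg _ _ _ hi (not_not.2 h),
        Finset.card_cons]
      push_cast
      rfl
    · rw [if_neg h, gPoly_add_right _ _ _ _ (Nat.cast_nonneg _) (Nat.cast_nonneg _),
        Finset.filter_cons_of_neg _ _ _ hi h, Finset.filter_cons_of_pos _ _ _ hi h,
        Finset.card_cons]
      push_cast
      rfl

/-! ### The volume polynomial and its integrals -/

/-- The polynomial giving the volume of `orthant n \ gPoly m n p q` (for `m ≤ n`). The truncated
subtraction in `j - m` is intended: the exponent of `2` is `max (j - m) 0`. -/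
def covol (m n : ℕ) (p q : ℝ) : ℝ :=
  ∑ j ∈ Finset.range (n + 1),
    (2 : ℝ) ^ (j - m) * (p ^ j / (j.factorial : ℝ)) * (q ^ (n - j) / ((n - j).factorial : ℝ))

theorem covol_nonneg (m n : ℕ) {p q : ℝ} (hp : 0 ≤ p) (hq : 0 ≤ q) : 0 ≤ covol m n p q :=
  Finset.sum_nonneg fun j _ => by positivity

theorem continuous_covol (m n : ℕ) : Continuous fun x : ℝ × ℝ => covol m n x.1 x.2 := by
  unfold covol; fun_prop

theorem covol_zero_right (m n : ℕ) (p : ℝ) :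
    covol m n p 0 = 2 ^ (n - m) * (p ^ n / (n.factorial : ℝ)) := by
  rw [covol, Finset.sum_eq_single n]
  · simp
  · intro j hj hjn
    have : n - j ≠ 0 := by have := Finset.mem_range.1 hj; omega
    simp [this]
  · simp

theorem covol_zero_left (m n : ℕ) (q : ℝ) : covol m n 0 q = q ^ n / (n.factorial : ℝ) := by
  rw [covol, Finset.sum_eq_single 0]
  · simp
  · intro j hj hjn
    simp [hjn]
  · simp

theorem covol_self (m : ℕ) (p q : ℝ) : covol m m p q = (p + q) ^ m / (m.factorial : ℝ) := by
  rw [covol, add_pow, Finset.sum_div]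
  refine Finset.sum_congr rfl fun j hj => ?_
  have hj : j ≤ m := by have := Finset.mem_range.1 hj; omega
  rw [Nat.cast_choose ℝ hj, Nat.sub_eq_zero_of_le hj]
  have : (m.factorial : ℝ) ≠ 0 := by positivity
  field_simp

/-- Integrating over `q` raises the `q`-degree of every monomial by one, which yields all monomials of
`covol m (n + 1)` except the pure power of `p`. -/
theorem integral_covol (m n : ℕ) (p q : ℝ) :
    ∫ v in (0 : ℝ)..q, covol m n p (q - v) = covol m (n + 1) p q
      - 2 ^ (n + 1 - m) * (p ^ (n + 1) / ((n + 1).factorial : ℝ)) := by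
  rw [intervalIntegral.integral_comp_sub_left (fun v => covol m n p v)]
  simp only [sub_self, sub_zero, covol]
  rw [intervalIntegral.integral_finsetSum (fun i _ =>
    Continuous.intervalIntegrable (by fun_prop) _ _), Finset.sum_range_succ _ (n + 1)]
  simp only [intervalIntegral.integral_const_mul, intervalIntegral.integral_div, integral_pow,
    Nat.sub_self, pow_zero, Nat.factorial_zero, Nat.cast_one, div_one, mul_one, add_sub_cancel_right]
  refine Finset.sum_congr rfl fun j hj => ?_
  have hj : j ≤ n := by have := Finset.mem_range.1 hj; omega
  rw [Nat.succ_sub hj, Nat.factorial_succ]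
  push_cast
  field_simp
  simp

/-- The pure power of `p` in `covol m (n + 1) p q`, missing from `integral_covol`. -/
theorem integral_covol_zero (m n : ℕ) (hmn : m ≤ n) (p q : ℝ) :
    ∫ v in q..(2 * p + q), covol m n (p - (v - q) / 2) 0 =
      2 ^ (n + 1 - m) * (p ^ (n + 1) / ((n + 1).factorial : ℝ)) := by
  have e : ∀ v : ℝ, p - (v - q) / 2 = (p + q / 2) - v / 2 := fun v => by ring
  simp only [e]
  rw [intervalIntegral.integral_comp_sub_div (fun v => covol m n v 0) two_ne_zero]
  have e1 : p + q / 2 - (2 * p + q) / 2 = 0 := by ring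
  simp only [covol_zero_right, e1, add_sub_cancel_right, intervalIntegral.integral_const_mul,
    intervalIntegral.integral_div, integral_pow, Nat.succ_sub hmn, Nat.factorial_succ]
  push_cast
  simp only [smul_eq_mul]
  field_simp
  simp [pow_succ]
  ring

theorem lintegral_Ico_ofReal {a b : ℝ} (hab : a ≤ b) (g : ℝ → ℝ) (hg : Continuous g)
    (h0 : ∀ v ∈ Set.Ico a b, 0 ≤ g v) :
    ∫⁻ v in Set.Ico a b, ENNReal.ofReal (g v) = ENNReal.ofReal (∫ v in a..b, g v) := by
  rw [intervalIntegral.integral_of_le hab, ← integral_Ico_eq_integral_Ioc,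
    ofReal_integral_eq_lintegral_ofReal]
  · exact (hg.integrableOn_Icc).mono_set Set.Ico_subset_Icc_self
  · exact (ae_restrict_iff' measurableSet_Ico).2 (Filter.Eventually.of_forall h0)

/-! ### Volumes by slicing along the last coordinate -/

theorem continuous_headSum (m n : ℕ) : Continuous (headSum m : (Fin n → ℝ) → ℝ) := by
  unfold headSum
  refine continuous_finsetSum _ fun i _ => ?_
  split_ifs <;> fun_prop

theorem continuous_tailSum (m n : ℕ) : Continuous (tailSum m : (Fin n → ℝ) → ℝ) := by
  unfold tailSum
  refine continuous_finsetSum _ fun i _ => ?_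
  split_ifs <;> fun_prop

theorem measurableSet_compl (m n : ℕ) (p q : ℝ) :
    MeasurableSet (orthant n \ gPoly m n p q) := by
  have ho : IsClosed (orthant n) := by
    simp only [orthant, Set.ofPred_forall]
    exact isClosed_iInter fun i => isClosed_le continuous_const (continuous_apply i)
  have h1 := continuous_headSum m n
  have h2 := continuous_tailSum m n
  refine ho.measurableSet.diff (IsClosed.measurableSet ?_)
  exact ho.inter ((isClosed_le continuous_const (h1.add h2)).inter
    (isClosed_le continuous_const ((continuous_const.mul h1).add h2)))

theorem headSum_snoc (m n : ℕ) (hmn : m ≤ n) (x : Fin n → ℝ) (v : ℝ) :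
    headSum m (Fin.snoc x v : Fin (n + 1) → ℝ) = headSum m x := by
  simp [headSum, Fin.sum_univ_castSucc, hmn]

theorem tailSum_snoc (m n : ℕ) (hmn : m ≤ n) (x : Fin n → ℝ) (v : ℝ) :
    tailSum m (Fin.snoc x v : Fin (n + 1) → ℝ) = tailSum m x + v := by
  simp [tailSum, Fin.sum_univ_castSucc, hmn]

theorem snoc_mem_orthant {n : ℕ} (x : Fin n → ℝ) (v : ℝ) :
    (Fin.snoc x v : Fin (n + 1) → ℝ) ∈ orthant (n + 1) ↔ x ∈ orthant n ∧ 0 ≤ v := by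
  simp [mem_orthant, Fin.forall_fin_succ']

theorem mem_diff_gPoly {m n : ℕ} {p q : ℝ} {x : Fin n → ℝ} :
    x ∈ orthant n \ gPoly m n p q ↔ x ∈ orthant n ∧
      (headSum m x + tailSum m x < p + q ∨ 2 * headSum m x + tailSum m x < 2 * p + q) := by
  simp only [gPoly, Set.mem_sdiff, Set.mem_ofPred_eq, not_and_or, not_le]
  tauto

/-- Fixing the last coordinate `v`, a slice of the complement is again such a complement: with
parameters `(p, q - v)` for `v < q`, and `(p - (v - q) / 2, 0)` once `q` is used up. -/
theorem slice_eq (m n : ℕ) (hmn : m ≤ n) {p q : ℝ} (hp : 0 ≤ p) (hq : 0 ≤ q) (v : ℝ) :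
    volume {x : Fin n → ℝ | (Fin.snoc x v : Fin (n + 1) → ℝ) ∈ orthant (n + 1) \ gPoly m (n + 1) p q}
    = (Set.Ico 0 q).indicator (fun v => volume (orthant n \ gPoly m n p (q - v))) v +
      (Set.Ico q (2 * p + q)).indicator
        (fun v => volume (orthant n \ gPoly m n (p - (v - q) / 2) 0)) v := by
  simp only [mem_diff_gPoly, snoc_mem_orthant, headSum_snoc _ _ hmn, tailSum_snoc _ _ hmn]
  have key : ∀ x ∈ orthant n, 0 ≤ headSum m x ∧ 0 ≤ tailSum m x := fun x hx =>
    ⟨headSum_nonneg m hx, tailSum_nonneg m hx⟩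
  rcases lt_or_ge v 0 with h0 | h0
  · rw [Set.indicator_of_notMem (by simp [h0]), Set.indicator_of_notMem
      (by simp only [Set.mem_Ico, not_and]; intro; linarith), add_zero]
    convert measure_empty (μ := (volume : Measure (Fin n → ℝ)))
    ext x
    simp [h0]
  rcases lt_or_ge v q with h1 | h1
  · rw [Set.indicator_of_mem (by simp [h0, h1]), Set.indicator_of_notMem
      (by simp [h1]), add_zero]
    congr 1
    ext x
    rw [mem_diff_gPoly, Set.mem_ofPred_eq]
    constructor
    · rintro ⟨⟨hx, -⟩, h⟩
      exact ⟨hx, h.imp (fun h => by linarith) (fun h => by linarith)⟩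
    · rintro ⟨hx, h⟩
      exact ⟨⟨hx, h0⟩, h.imp (fun h => by linarith) (fun h => by linarith)⟩
  rcases lt_or_ge v (2 * p + q) with h2 | h2
  · rw [Set.indicator_of_notMem (by simp [h1]), Set.indicator_of_mem (by simp [h1, h2]), zero_add]
    congr 1
    ext x
    rw [mem_diff_gPoly, Set.mem_ofPred_eq]
    constructor
    · rintro ⟨⟨hx, -⟩, h⟩
      obtain ⟨h3, h4⟩ := key x hx
      refine ⟨hx, Or.inr ?_⟩
      rcases h with h | h <;> linarith
    · rintro ⟨hx, h⟩
      obtain ⟨h3, h4⟩ := key x hx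
      refine ⟨⟨hx, h0⟩, Or.inr ?_⟩
      rcases h with h | h <;> linarith
  · rw [Set.indicator_of_notMem (by simp [h1]), Set.indicator_of_notMem (by simp [h2]), add_zero]
    convert measure_empty (μ := (volume : Measure (Fin n → ℝ)))
    ext x
    simp only [Set.mem_ofPred_eq, Set.mem_empty_iff_false, iff_false]
    rintro ⟨⟨hx, -⟩, h⟩
    obtain ⟨h3, h4⟩ := key x hx
    rcases h with h | h <;> linarith

/-- Induction on the dimension, adding one coordinate to the tail block. The parameters in `ih` may
exclude `(0, 0)`, where the formula fails for `n = 0`, because the half-open slicing intervals never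
reach it. -/
theorem volume_step (m n : ℕ) (hmn : m ≤ n)
    (ih : ∀ p q : ℝ, 0 ≤ p → 0 ≤ q → 0 < p + q →
      volume (orthant n \ gPoly m n p q) = ENNReal.ofReal (covol m n p q))
    (p q : ℝ) (hp : 0 ≤ p) (hq : 0 ≤ q) :
    volume (orthant (n + 1) \ gPoly m (n + 1) p q) = ENNReal.ofReal (covol m (n + 1) p q) := by
  have hvp := (volume_preserving_piFinSuccAbove (fun _ : Fin (n + 1) => ℝ) (Fin.last n)).symm
  have hm := measurableSet_compl m (n + 1) p q
  rw [← hvp.measure_preimage_equiv, Measure.volume_eq_prod,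
    Measure.prod_apply ((MeasurableEquiv.measurable _) hm)]
  have e : ∀ v : ℝ, (Prod.mk v ⁻¹'
      ((MeasurableEquiv.piFinSuccAbove (fun _ : Fin (n + 1) => ℝ) (Fin.last n)).symm ⁻¹'
        (orthant (n + 1) \ gPoly m (n + 1) p q))) =
      {x : Fin n → ℝ | (Fin.snoc x v : Fin (n + 1) → ℝ) ∈
        orthant (n + 1) \ gPoly m (n + 1) p q} := by
    intro v
    ext x
    simp only [Set.mem_preimage, Set.mem_ofPred_eq]
    rw [← Fin.insertNth_last']
    rfl
  have c1 : Continuous fun v => covol m n p (q - v) :=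
    (continuous_covol m n).comp (by fun_prop : Continuous fun v : ℝ => (p, q - v))
  have c2 : Continuous fun v => covol m n (p - (v - q) / 2) 0 :=
    (continuous_covol m n).comp (by fun_prop : Continuous fun v : ℝ => (p - (v - q) / 2, (0 : ℝ)))
  have e2 : ∀ v : ℝ, volume (Prod.mk v ⁻¹'
      ((MeasurableEquiv.piFinSuccAbove (fun _ : Fin (n + 1) => ℝ) (Fin.last n)).symm ⁻¹'
        (orthant (n + 1) \ gPoly m (n + 1) p q))) =
      (Set.Ico 0 q).indicator (fun v => ENNReal.ofReal (covol m n p (q - v))) v +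
      (Set.Ico q (2 * p + q)).indicator
        (fun v => ENNReal.ofReal (covol m n (p - (v - q) / 2) 0)) v := by
    intro v
    rw [e, slice_eq m n hmn hp hq]
    congr 1
    · refine congrFun (Set.indicator_congr fun v hv => ?_) v
      exact ih _ _ hp (by linarith [hv.2]) (by linarith [hv.2])
    · refine congrFun (Set.indicator_congr fun v hv => ?_) v
      exact ih _ _ (by linarith [hv.2]) le_rfl (by linarith [hv.2])
  refine (lintegral_congr e2).trans ?_
  rw [lintegral_add_left (c1.measurable.ennreal_ofReal.indicator measurableSet_Ico),
    lintegral_indicator measurableSet_Ico, lintegral_indicator measurableSet_Ico,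
    lintegral_Ico_ofReal hq _ c1
      (fun v hv => covol_nonneg m n hp (by linarith [hv.2])),
    lintegral_Ico_ofReal (by linarith) _ c2
      (fun v hv => covol_nonneg m n (by linarith [hv.2]) le_rfl),
    ← ENNReal.ofReal_add, integral_covol, integral_covol_zero m n hmn]
  · congr 1; ring
  · exact intervalIntegral.integral_nonneg hq fun v hv => covol_nonneg m n hp (by linarith [hv.2])
  · exact intervalIntegral.integral_nonneg (by linarith)
      fun v hv => covol_nonneg m n (by linarith [hv.2]) le_rfl

/-- With an empty head block all coordinates are tail coordinates. -/
theorem volume_zero (n : ℕ) : ∀ p q : ℝ, 0 ≤ p → 0 ≤ q → 0 < p + q →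
    volume (orthant n \ gPoly 0 n p q) = ENNReal.ofReal (covol 0 n p q) := by
  induction n with
  | zero =>
    intro p q hp hq hpq
    have : orthant 0 \ gPoly 0 0 p q = Set.univ := by
      ext x
      rw [mem_diff_gPoly]
      simp [mem_orthant, headSum, tailSum, hpq]
    rw [this]
    simp [covol, volume_pi]
  | succ n ih => exact fun p q hp hq _ => volume_step 0 n (Nat.zero_le _) ih p q hp hq

theorem volume_diff_gPoly (m n : ℕ) (hmn : m ≤ n) : ∀ p q : ℝ, 0 ≤ p → 0 ≤ q → 0 < p + q →
    volume (orthant n \ gPoly m n p q) = ENNReal.ofReal (covol m n p q) := by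
  induction n, hmn using Nat.le_induction with
  | base =>
    intro p q hp hq hpq
    -- With an empty tail block the region is a simplex, which is also the case `m = 0`, `p = 0`.
    have : orthant m \ gPoly m m p q = orthant m \ gPoly 0 m 0 (p + q) := by
      ext x
      rw [mem_diff_gPoly, mem_diff_gPoly]
      have h1 : tailSum m x = 0 := Finset.sum_eq_zero fun i _ => by simp
      have h2 : headSum 0 x = 0 := Finset.sum_eq_zero fun i _ => by simp
      have h3 : headSum m x = tailSum 0 x := Finset.sum_congr rfl fun i _ => by simp
      rw [h1, h2, h3]
      refine and_congr_right fun _ => ?_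
      constructor
      · rintro (h | h)
        · left; linarith
        · left; linarith
      · rintro (h | h)
        · left; linarith
        · left; linarith
    rw [this, volume_zero m 0 (p + q) le_rfl (by linarith) (by linarith), covol_zero_left,
      covol_self]
  | succ n hmn ih => exact fun p q hp hq _ => volume_step m n hmn ih p q hp hq

/-! ### Alternating sums -/

open Finset in
/-- The left-hand side is the `a`-th forward difference at `0` of `x ↦ x ^ j`; it vanishes for
`j < a` and equals `a!` for `j = a`. -/
theorem alt_sum_pow (a j : ℕ) (h : j ≤ a) :
    ∑ i ∈ range (a + 1), (a.choose i : ℝ) * ((-1) ^ (a - i) * (i : ℝ) ^ j)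
      = if j = a then (a.factorial : ℝ) else 0 := by
  have e := fwdDiff_iter_eq_sum_shift (1 : ℝ) (fun x : ℝ => x ^ j) a 0
  have : ∑ i ∈ range (a + 1), (a.choose i : ℝ) * ((-1) ^ (a - i) * (i : ℝ) ^ j)
      = (fwdDiff (1 : ℝ))^[a] (fun x : ℝ => x ^ j) 0 := by
    rw [e]
    refine sum_congr rfl fun i hi => ?_
    simp
    ring
  rw [this]
  split_ifs with hj
  · subst hj
    rw [fwdDiff_iter_eq_factorial]; simp
  · rw [fwdDiff_iter_pow_eq_zero_of_lt (by omega)]; rfl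

open Finset in
theorem alt_sum_powerset {n : ℕ} (A : Finset (Fin n)) (j : ℕ) (h : j ≤ A.card) :
    ∑ I ∈ A.powerset, (-1 : ℝ) ^ (A.card - I.card) * (I.card : ℝ) ^ j
      = if j = A.card then (A.card.factorial : ℝ) else 0 := by
  rw [← alt_sum_pow _ _ h,
    sum_powerset_apply_card (fun c : ℕ => (-1 : ℝ) ^ (A.card - c) * (c : ℝ) ^ j)]
  simp only [nsmul_eq_mul]

open Finset in
theorem sum_powerset_univ_split {n : ℕ} (P : Fin n → Prop) [DecidablePred P]
    (F G : Finset (Fin n) → ℝ) :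
    ∑ I ∈ (univ : Finset (Fin n)).powerset, F (I.filter P) * G (I.filter fun i => ¬ P i) =
      (∑ I ∈ (univ.filter P).powerset, F I) *
        ∑ I ∈ (univ.filter fun i => ¬ P i).powerset, G I := by
  rw [sum_mul_sum, ← sum_product']
  refine sum_nbij' (fun I => (I.filter P, I.filter fun i => ¬ P i)) (fun S => S.1 ∪ S.2)
    ?_ ?_ ?_ ?_ ?_
  · intro I _
    simp only [mem_product, mem_powerset]
    exact ⟨filter_subset_filter _ (subset_univ _), filter_subset_filter _ (subset_univ _)⟩
  · intro S _; simp
  · intro I _; exact filter_union_filter_not_eq _ _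
  · rintro ⟨S, T⟩ h
    simp only [mem_product, mem_powerset, subset_iff, mem_filter, mem_univ, true_and] at h
    ext i
    · simp only [mem_filter, mem_union]; have := @h.1 i; have := @h.2 i; tauto
    · simp only [mem_filter, mem_union]; have := @h.1 i; have := @h.2 i; tauto
  · intro I _; rfl

open Finset in
/-- The alternating sum defining the mixed volume extracts from `p ^ j * q ^ (n - j)` the case `j = k`.
It factors over the two blocks of summands; for `j < k` the first factor vanishes, for `j > k` the
second one does. -/
theorem alt_sum_split {n k : ℕ} (hkn : k ≤ n) (j : ℕ) (hj : j ≤ n) :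
    ∑ I ∈ (univ : Finset (Fin n)).powerset, (-1 : ℝ) ^ (n - I.card) *
      (((I.filter fun i : Fin n => (i : ℕ) < k).card : ℝ) ^ j *
        ((I.filter fun i : Fin n => ¬ (i : ℕ) < k).card : ℝ) ^ (n - j)) =
      if j = k then (k.factorial : ℝ) * ((n - k).factorial : ℝ) else 0 := by
  have hA : (univ.filter fun i : Fin n => (i : ℕ) < k).card = k := by
    rw [Fin.card_filter_val_lt]; omega
  have hA' : (univ.filter fun i : Fin n => ¬ (i : ℕ) < k).card = n - k := by
    have := card_filter_add_card_filter_not (s := (univ : Finset (Fin n)))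
      (fun i : Fin n => (i : ℕ) < k)
    rw [hA, card_univ, Fintype.card_fin] at this
    omega
  have e : ∀ I ∈ (univ : Finset (Fin n)).powerset, (-1 : ℝ) ^ (n - I.card) *
      (((I.filter fun i : Fin n => (i : ℕ) < k).card : ℝ) ^ j *
        ((I.filter fun i : Fin n => ¬ (i : ℕ) < k).card : ℝ) ^ (n - j)) =
      (fun S : Finset (Fin n) => (-1 : ℝ) ^ (k - S.card) * (S.card : ℝ) ^ j)
        (I.filter fun i : Fin n => (i : ℕ) < k) *
      (fun S : Finset (Fin n) => (-1 : ℝ) ^ (n - k - S.card) * (S.card : ℝ) ^ (n - j))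
        (I.filter fun i : Fin n => ¬ (i : ℕ) < k) := by
    intro I _
    have h1 : (I.filter fun i : Fin n => (i : ℕ) < k).card ≤ k :=
      (card_le_card (filter_subset_filter _ (subset_univ I))).trans_eq hA
    have h2 : (I.filter fun i : Fin n => ¬ (i : ℕ) < k).card ≤ n - k :=
      (card_le_card (filter_subset_filter _ (subset_univ I))).trans_eq hA'
    have h3 := card_filter_add_card_filter_not (s := I) (fun i : Fin n => (i : ℕ) < k)
    have h4 : n - I.card = (k - (I.filter fun i : Fin n => (i : ℕ) < k).card) +
      (n - k - (I.filter fun i : Fin n => ¬ (i : ℕ) < k).card) := by omega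
    rw [h4, pow_add]
    ring
  rw [sum_congr rfl e]
  refine (sum_powerset_univ_split (fun i : Fin n => (i : ℕ) < k)
    (fun S => (-1 : ℝ) ^ (k - S.card) * (S.card : ℝ) ^ j)
    (fun S => (-1 : ℝ) ^ (n - k - S.card) * (S.card : ℝ) ^ (n - j))).trans ?_
  rcases le_total j k with h | h
  · have := alt_sum_powerset (univ.filter fun i : Fin n => (i : ℕ) < k) j (by omega)
    rw [hA] at this
    rw [this]
    split_ifs with hjk
    · subst hjk
      have := alt_sum_powerset (univ.filter fun i : Fin n => ¬ (i : ℕ) < j) (n - j) (by omega)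
      rw [hA', if_pos rfl] at this
      rw [this]
    · simp
  · have h2 := alt_sum_powerset (univ.filter fun i : Fin n => ¬ (i : ℕ) < k) (n - j) (by omega)
    rw [hA'] at h2
    rw [h2]
    split_ifs with h3 h4 h4
    · subst h4
      have := alt_sum_powerset (univ.filter fun i : Fin n => (i : ℕ) < j) j (by omega)
      rw [hA, if_pos rfl] at this
      rw [this]
    · omega
    · omega
    · simp

/-! ### The mixed volume -/

theorem stmt_4 {n : ℕ} (hn : 1 ≤ n) (k : ℕ) (hk1 : 1 ≤ k) (hkn : k ≤ n)
    (B : Fin n → Set (Fin n → ℝ))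
    (hB : ∀ i : Fin n, B i =
      if (i : ℕ) < k then Caf (fun j => if (j : ℕ) < k - 1 then (1 : ℝ) else 2)
      else Caf (fun _ => (1 : ℝ))) :
    MV B = 2 := by
  set c : ℕ → ℝ := fun j => 2 ^ (j - (k - 1)) / ((j.factorial : ℝ) * ((n - j).factorial : ℝ))
  have hB' : ∀ i : Fin n, B i =
      if (i : ℕ) < k then gPoly (k - 1) n 1 0 else gPoly (k - 1) n 0 1 := by
    intro i
    rw [hB, Caf_one_two, Caf_one (k - 1)]
  have hterm : ∀ I ∈ Finset.univ.powerset.filter (fun I : Finset (Fin n) => I.Nonempty),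
      (-1 : ℝ) ^ (n - I.card) * (volume (orthant n \ ∑ i ∈ I, B i)).toReal =
      (-1 : ℝ) ^ (n - I.card) * covol (k - 1) n
        ((I.filter fun i : Fin n => (i : ℕ) < k).card : ℝ)
        ((I.filter fun i : Fin n => ¬ (i : ℕ) < k).card : ℝ) := by
    intro I hI
    have hI := (Finset.mem_filter.1 hI).2
    have hpos : (0 : ℝ) < ((I.filter fun i : Fin n => (i : ℕ) < k).card : ℝ) +
        ((I.filter fun i : Fin n => ¬ (i : ℕ) < k).card : ℝ) := by
      have h3 := Finset.card_filter_add_card_filter_not (s := I) (fun i : Fin n => (i : ℕ) < k)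
      have := hI.card_pos
      exact_mod_cast h3 ▸ this
    rw [sum_eq_gPoly B hB' I hI, volume_diff_gPoly _ _ (by omega) _ _ (Nat.cast_nonneg _)
      (Nat.cast_nonneg _) hpos,
      ENNReal.toReal_ofReal (covol_nonneg _ _ (Nat.cast_nonneg _) (Nat.cast_nonneg _))]
  -- The empty set may be included, since `covol` vanishes at `(0, 0)` for `n ≥ 1`.
  rw [MV, Finset.sum_congr rfl hterm, Finset.sum_filter_of_ne]
  · have e : ∀ I : Finset (Fin n), (-1 : ℝ) ^ (n - I.card) * covol (k - 1) n
        ((I.filter fun i : Fin n => (i : ℕ) < k).card : ℝ)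
        ((I.filter fun i : Fin n => ¬ (i : ℕ) < k).card : ℝ) =
        ∑ j ∈ Finset.range (n + 1), c j * ((-1 : ℝ) ^ (n - I.card) *
          (((I.filter fun i : Fin n => (i : ℕ) < k).card : ℝ) ^ j *
          ((I.filter fun i : Fin n => ¬ (i : ℕ) < k).card : ℝ) ^ (n - j))) := by
      intro I
      rw [covol, Finset.mul_sum]
      refine Finset.sum_congr rfl fun j _ => ?_
      simp only [c]
      field_simp
    simp only [e]
    rw [Finset.sum_comm]
    simp only [← Finset.mul_sum]
    rw [Finset.sum_congr rfl fun j hj => by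
      rw [alt_sum_split hkn j (by have := Finset.mem_range.1 hj; omega)]]
    rw [Finset.sum_eq_single k]
    · simp only [c, if_true]
      -- The coefficient of index `k` carries `2 ^ (k - (k - 1))`.
      rw [show k - (k - 1) = 1 by omega]
      field_simp
    · intro j _ hj; simp [hj]
    · intro h; exact absurd (Finset.mem_range.2 (by omega)) h
  · intro I _ h
    contrapose! h
    subst h
    simp [covol_zero_left]
    omega
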